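/- The Wasserstein space 𝒲_1(ℝ²) over ℝ² with the maximum metric is diagonally rigid: for every isometry Φ : 𝒲_1(ℝ²) → 𝒲_1(ℝ²) there exists an isometry T of (ℝ², d_m) such that (Φ ∘ T_#)(μ) = μ for every μ ∈ 𝒲_1(ℝ²) whose support is contained in L₊ or in L₋. -/

import Mathlib

open MeasureTheory

/-- The `p`-Wasserstein distance between two measures, defined as the infimum over all
couplings `π` of `μ` and `ν` of `(∬ d(x,y)^p dπ)^(1/p)`. -/
noncomputable def Wdist {X : Type*} [MeasurableSpace X] [PseudoMetricSpace X] (p : ℝ)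
    (μ ν : Measure X) : ℝ :=
  (⨅ π ∈ {π : Measure (X × X) | π.map Prod.fst = μ ∧ π.map Prod.snd = ν},
    (∫⁻ q, edist q.1 q.2 ^ p ∂π) ^ (1 / p)).toReal

/-- The `p`-Wasserstein space over `X`: Borel probability measures on `X` with finite
`p`-th moment. -/
def WSet (X : Type*) [MeasurableSpace X] [PseudoMetricSpace X] (p : ℝ) : Set (Measure X) :=
  {μ | IsProbabilityMeasure μ ∧ ∃ x₀ : X, ∫⁻ x, edist x x₀ ^ p ∂μ < ⊤}

/-- An isometry of the underlying metric space: a distance-preserving bijection. -/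
def IsIsom {X : Type*} [PseudoMetricSpace X] (T : X → X) : Prop :=
  Function.Bijective T ∧ ∀ x y, dist (T x) (T y) = dist x y

/-- An isometry of the `p`-Wasserstein space over `X`: a bijection of the space of
probability measures with finite `p`-th moment preserving the Wasserstein distance. -/
def IsWIsometry (X : Type*) [MeasurableSpace X] [PseudoMetricSpace X] (p : ℝ)
    (Φ : Measure X → Measure X) : Prop :=
  Set.BijOn Φ (WSet X p) (WSet X p) ∧
    ∀ μ ∈ WSet X p, ∀ ν ∈ WSet X p, Wdist p (Φ μ) (Φ ν) = Wdist p μ ν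

/-- The (topological) support of a measure. -/
def msupport {X : Type*} [TopologicalSpace X] [MeasurableSpace X] (μ : Measure X) : Set X :=
  {x | ∀ U : Set X, IsOpen U → x ∈ U → μ U ≠ 0}

def diagLine (ε a : ℝ) : Set (ℝ × ℝ) := {z | z.2 = ε * z.1 + a}

def Lplus : Set (ℝ × ℝ) := {z | z.2 = z.1}

def Lminus : Set (ℝ × ℝ) := {z | z.2 = -z.1}

/-- The closed square `Q = [-1,1]²`. -/
abbrev Qs : Set (ℝ × ℝ) := Set.Icc (-1, -1) (1, 1)

def LplusQ : Set ↥Qs := {q | (q : ℝ × ℝ).2 = (q : ℝ × ℝ).1}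

def LminusQ : Set ↥Qs := {q | (q : ℝ × ℝ).2 = -(q : ℝ × ℝ).1}

/-!
In coordinates rotated by `π / 4` the maximum metric on the plane is an `ℓ¹` metric, and `L₊` and
`L₋` are coordinate lines. The proof reconstructs a measure from its distances to Dirac measures.

Pushing all mass away from a coordinate line, parallel to the other axis, lengthens every
transport from a measure on that line by a constant; so such a measure is prolongable. Conversely,
if `μ` charges both sides of the two coordinate lines through `y` and `δ_y` lies between `μ` and
`ζ`, then `ζ = δ_y`, because `ℓ¹` betweenness holds coordinatewise. Hence the prolongable measures
are those on coordinate lines. Dirac measures are then exactly the measures from which every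
measure can be prolonged to a non-prolongable one, so an isometry `Φ` permutes the Dirac measures
and induces an isometry `T` of the plane.

It follows that `μ` and `Φ (T_# μ)` have the same potential `y ↦ ∫ d(z, y)`. In the `ℓ¹` metric the
potential is a sum of the potentials of the two marginals, and the right derivative of the
potential of a measure on the line is `2 F - 1` with `F` its distribution function. So the
potential determines both marginals, and these determine a measure on a coordinate line.
-/

open Filter ProbabilityTheory Set
open scoped ENNReal Topology

section AlmostEverywhere

variable {Ω α : Type*} [MeasurableSpace Ω] {μ : Measure Ω}

lemma exists_ae_eq_const_or_frequently_lt_and_gt [LinearOrder α] [TopologicalSpace α]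
    [OrderTopology α] [DenselyOrdered α] [SecondCountableTopology α] [MeasurableSpace α]
    [OpensMeasurableSpace α] [Nonempty α] {f : Ω → α} (hf : AEMeasurable f μ) :
    (∃ c, ∀ᵐ a ∂μ, f a = c) ∨ ∃ r, (∃ᵐ a ∂μ, f a < r) ∧ ∃ᵐ a ∂μ, r < f a := by
  have hsupp : ∀ᵐ a ∂μ, f a ∈ (μ.map f).support := ae_of_ae_map hf Measure.support_mem_ae
  rcases (μ.map f).support.subsingleton_or_nontrivial with hsub | hnontriv
  · left
    rcases hsub.eq_empty_or_singleton with hs | ⟨c, hs⟩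
    · exact ‹Nonempty α›.elim fun c => ⟨c, hsupp.mono fun a ha => by simp [hs] at ha⟩
    · exact ⟨c, hsupp.mono fun a ha => by simpa [hs] using ha⟩
  · right
    obtain ⟨x, hx, y, hy, hxy⟩ := hnontriv.exists_lt
    obtain ⟨r, hxr, hry⟩ := exists_between hxy
    have hlt := (Measure.mem_support_iff_forall x).1 hx _ (Iio_mem_nhds hxr)
    have hgt := (Measure.mem_support_iff_forall y).1 hy _ (Ioi_mem_nhds hry)
    rw [Measure.map_apply_of_aemeasurable hf measurableSet_Iio] at hlt
    rw [Measure.map_apply_of_aemeasurable hf measurableSet_Ioi] at hgt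
    exact ⟨r, frequently_ae_iff.2 hlt.ne', frequently_ae_iff.2 hgt.ne'⟩

lemma eq_dirac_of_ae_eq [IsProbabilityMeasure μ] {x : Ω} (h : ∀ᵐ z ∂μ, z = x) :
    μ = Measure.dirac x := by
  calc μ = μ.map id := Measure.map_id.symm
    _ = μ.map fun _ => x := Measure.map_congr h
    _ = Measure.dirac x := by simp

lemma ae_mem_of_msupport_subset {X : Type*} [TopologicalSpace X] [HereditarilyLindelofSpace X]
    [MeasurableSpace X] {μ : Measure X} {S : Set X} (h : msupport μ ⊆ S) : ∀ᵐ z ∂μ, z ∈ S := by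
  refine mem_of_superset Measure.support_mem_ae fun x hx => h fun U hU hxU => ?_
  exact ((Measure.mem_support_iff_forall x).1 hx U (hU.mem_nhds hxU)).ne'

end AlmostEverywhere

section Gluing

variable {α β γ : Type*} [MeasurableSpace α] [MeasurableSpace β] [MeasurableSpace γ]

lemma exists_measure_map_eq_and_map_eq_of_marginal_eq [StandardBorelSpace γ] [Nonempty γ]
    {π : Measure (α × β)} {ρ : Measure (β × γ)} [IsFiniteMeasure π] [IsFiniteMeasure ρ]
    (h : π.map Prod.snd = ρ.map Prod.fst) :
    ∃ σ : Measure ((α × β) × γ), σ.map Prod.fst = π ∧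
      σ.map (fun q => (q.1.2, q.2)) = ρ := by
  refine ⟨π ⊗ₘ ρ.condKernel.prodMkLeft α, Measure.fst_compProd _ _, ?_⟩
  have hproj : Measurable fun q : (α × β) × γ => (q.1.2, q.2) := by fun_prop
  ext s hs
  rw [Measure.map_apply hproj hs, Measure.compProd_apply (hproj hs)]
  calc ∫⁻ a, (ρ.condKernel.prodMkLeft α) a (Prod.mk a ⁻¹' ((fun q => (q.1.2, q.2)) ⁻¹' s)) ∂π
      = ∫⁻ a, ρ.condKernel a.2 (Prod.mk a.2 ⁻¹' s) ∂π := rfl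
    _ = ∫⁻ b, ρ.condKernel b (Prod.mk b ⁻¹' s) ∂ρ.fst := by
        rw [Measure.fst, ← h, lintegral_map (Kernel.measurable_kernel_prodMk_left hs)
          measurable_snd]
    _ = ρ s := by rw [← Measure.compProd_apply hs, ρ.disintegrate]

end Gluing

section TransportCost

variable {X : Type*} [MeasurableSpace X] [PseudoMetricSpace X] {μ ν ρ : Measure X}

/-- The optimal transport cost from `μ` to `ν` for the cost function `edist`: the `1`-Wasserstein
distance before truncation to a real number. -/
noncomputable def transportCost (μ ν : Measure X) : ℝ≥0∞ :=
  ⨅ π ∈ {π : Measure (X × X) | π.map Prod.fst = μ ∧ π.map Prod.snd = ν}, ∫⁻ q, edist q.1 q.2 ∂π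

lemma Wdist_one_eq_toReal_transportCost : Wdist 1 μ ν = (transportCost μ ν).toReal := by
  simp only [Wdist, transportCost, ENNReal.rpow_one, div_one]

lemma transportCost_le {π : Measure (X × X)} (hfst : π.map Prod.fst = μ)
    (hsnd : π.map Prod.snd = ν) : transportCost μ ν ≤ ∫⁻ q, edist q.1 q.2 ∂π :=
  iInf₂_le π ⟨hfst, hsnd⟩

lemma le_transportCost {c : ℝ≥0∞} (h : ∀ π : Measure (X × X), π.map Prod.fst = μ →
    π.map Prod.snd = ν → c ≤ ∫⁻ q, edist q.1 q.2 ∂π) : c ≤ transportCost μ ν :=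
  le_iInf₂ fun π hπ => h π hπ.1 hπ.2

lemma transportCost_add_le (μ μ' ν ν' : Measure X) :
    transportCost (μ + μ') (ν + ν') ≤ transportCost μ ν + transportCost μ' ν' := by
  refine ENNReal.le_iInf₂_add_iInf₂ fun π hπ π' hπ' => ?_
  rw [← lintegral_add_measure]
  exact transportCost_le (by rw [Measure.map_add _ _ measurable_fst, hπ.1, hπ'.1])
    (by rw [Measure.map_add _ _ measurable_snd, hπ.2, hπ'.2])

lemma transportCost_smul_le {c : ℝ≥0∞} (hc : c ≠ ∞) (μ ν : Measure X) :
    transportCost (c • μ) (c • ν) ≤ c * transportCost μ ν := by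
  rcases eq_or_ne c 0 with rfl | hc₀
  · simpa using transportCost_le (π := 0) (μ := (0 : ℝ≥0∞) • μ) (ν := (0 : ℝ≥0∞) • ν)
      (by simp) (by simp)
  simp only [transportCost.eq_def μ, ENNReal.mul_iInf_of_ne hc₀ hc]
  refine le_iInf₂ fun π hπ => ?_
  rw [← smul_eq_mul, ← lintegral_smul_measure]
  exact transportCost_le (by rw [Measure.map_smul, hπ.1]) (by rw [Measure.map_smul, hπ.2])

lemma transportCost_smul_add_smul_le {a b : ℝ≥0∞} (hab : a + b = 1) (μ ν ν' : Measure X) :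
    transportCost μ (a • ν + b • ν') ≤ a * transportCost μ ν + b * transportCost μ ν' := by
  have ha : a ≠ ∞ := fun h => by simp [h] at hab
  have hb : b ≠ ∞ := fun h => by simp [h] at hab
  calc transportCost μ (a • ν + b • ν') = transportCost (a • μ + b • μ) (a • ν + b • ν') := by
        rw [← add_smul, hab, one_smul]
    _ ≤ transportCost (a • μ) (a • ν) + transportCost (b • μ) (b • ν') :=
        transportCost_add_le _ _ _ _
    _ ≤ _ := add_le_add (transportCost_smul_le ha _ _) (transportCost_smul_le hb _ _)

variable [OpensMeasurableSpace X] [SecondCountableTopology X]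

lemma transportCost_comm (μ ν : Measure X) : transportCost μ ν = transportCost ν μ := by
  have hle (μ ν : Measure X) : transportCost μ ν ≤ transportCost ν μ := by
    refine le_transportCost fun π hfst hsnd => ?_
    calc transportCost μ ν ≤ ∫⁻ q, edist q.1 q.2 ∂π.map Prod.swap :=
          transportCost_le (by rwa [Measure.map_map measurable_fst measurable_swap])
            (by rwa [Measure.map_map measurable_snd measurable_swap])
      _ = ∫⁻ q, edist q.1 q.2 ∂π := by
          rw [lintegral_map measurable_edist measurable_swap]
          simp only [Prod.fst_swap, Prod.snd_swap, edist_comm]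
  exact (hle μ ν).antisymm (hle ν μ)

lemma transportCost_dirac_left [IsProbabilityMeasure μ] (x : X) :
    transportCost (Measure.dirac x) μ = ∫⁻ z, edist x z ∂μ := by
  refine le_antisymm ?_ (le_transportCost fun π hfst hsnd => ?_)
  · calc transportCost (Measure.dirac x) μ ≤ ∫⁻ q, edist q.1 q.2 ∂(Measure.dirac x).prod μ :=
          transportCost_le (by simp) (by simp)
      _ = ∫⁻ z, edist x z ∂μ := by
          rw [Measure.dirac_prod, lintegral_map measurable_edist measurable_prodMk_left]
  · have hfst_ae : ∀ᵐ q ∂π, edist x q.1 = 0 := by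
      refine ae_of_ae_map measurable_fst.aemeasurable (p := fun z => edist x z = 0) ?_
      rw [hfst, ae_dirac_iff (measurableSet_eq_fun measurable_edist_right measurable_const)]
      exact edist_self x
    calc ∫⁻ z, edist x z ∂μ = ∫⁻ q, edist x q.2 ∂π := by
          rw [← hsnd, lintegral_map measurable_edist_right measurable_snd]
      _ ≤ ∫⁻ q, edist q.1 q.2 ∂π := lintegral_mono_ae <| hfst_ae.mono fun q hq => by
          simpa only [hq, zero_add] using edist_triangle x q.1 q.2

lemma transportCost_dirac_right [IsProbabilityMeasure μ] (x : X) :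
    transportCost μ (Measure.dirac x) = ∫⁻ z, edist z x ∂μ := by
  simp only [transportCost_comm μ, transportCost_dirac_left, edist_comm]

lemma transportCost_map_right_le_of_coupling {g : X → X} (hg : Measurable g)
    {π : Measure (X × X)} (hfst : π.map Prod.fst = μ) (hsnd : π.map Prod.snd = ν) :
    transportCost μ (ν.map g) ≤ ∫⁻ q, edist q.1 (g q.2) ∂π := by
  have hprod : Measurable (Prod.map id g : X × X → X × X) := measurable_id.prodMap hg
  calc transportCost μ (ν.map g) ≤ ∫⁻ q, edist q.1 q.2 ∂π.map (Prod.map id g) := by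
        refine transportCost_le ?_ ?_
        · rw [Measure.map_map measurable_fst hprod, ← hfst]
          rfl
        · rw [Measure.map_map measurable_snd hprod, ← hsnd, Measure.map_map hg measurable_snd]
          rfl
    _ = ∫⁻ q, edist q.1 (g q.2) ∂π := lintegral_map measurable_edist hprod

lemma transportCost_map_right_le {g : X → X} (hg : Measurable g) :
    transportCost μ (μ.map g) ≤ ∫⁻ z, edist z (g z) ∂μ := by
  have hdiag : Measurable fun z : X => (z, z) := measurable_id.prodMk measurable_id
  have hmap {k : X × X → X} (hk : Measurable k) (h : ∀ z, k (z, z) = z) :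
      (μ.map fun z => (z, z)).map k = μ := by
    rw [Measure.map_map hk hdiag, show (k ∘ fun z => (z, z)) = id from funext h, Measure.map_id]
  calc transportCost μ (μ.map g) ≤ ∫⁻ q, edist q.1 (g q.2) ∂μ.map fun z => (z, z) :=
        transportCost_map_right_le_of_coupling hg (hmap measurable_fst fun _ => rfl)
          (hmap measurable_snd fun _ => rfl)
    _ = ∫⁻ z, edist z (g z) ∂μ :=
        lintegral_map (measurable_fst.edist (hg.comp measurable_snd)) hdiag

lemma ae_map_edist_apply_self_eq_zero_of_leftInverse {f g : X → X} (hf : Measurable f)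
    (hg : Measurable g) (hfg : Function.LeftInverse f g) :
    ∀ᵐ z ∂ν.map g, edist (g (f z)) z = 0 := by
  have hmeas : MeasurableSet {z | edist (g (f z)) z = 0} :=
    measurableSet_eq_fun ((hg.comp hf).edist measurable_id) measurable_const
  rw [ae_map_iff hg.aemeasurable hmeas]
  exact ae_of_all _ fun z => by rw [hfg z, edist_self]

lemma transportCost_map_right_eq_add [IsProbabilityMeasure μ] {f g : X → X} (hf : Measurable f)
    (hg : Measurable g) (hfg : Function.LeftInverse f g) {c : ℝ≥0∞}
    (h : ∀ᵐ a ∂μ, ∀ z, edist a (g z) = edist a z + c) :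
    transportCost μ (ν.map g) = transportCost μ ν + c := by
  have hcost {π : Measure (X × X)} (hfst : π.map Prod.fst = μ) (k : X → X) :
      ∫⁻ q, edist q.1 (g (k q.2)) ∂π = ∫⁻ q, edist q.1 (k q.2) ∂π + c := by
    subst hfst
    have : IsProbabilityMeasure π := Measure.isProbabilityMeasure_of_map Prod.fst
    calc ∫⁻ q, edist q.1 (g (k q.2)) ∂π = ∫⁻ q, (edist q.1 (k q.2) + c) ∂π :=
          lintegral_congr_ae <| (ae_of_ae_map measurable_fst.aemeasurable h).mono
            fun q hq => hq (k q.2)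
      _ = ∫⁻ q, edist q.1 (k q.2) ∂π + c := by
          rw [lintegral_add_right _ measurable_const, lintegral_const, measure_univ, mul_one]
  refine le_antisymm ?_ (le_transportCost fun π hfst hsnd => ?_)
  · rw [transportCost.eq_def μ ν]
    simp only [ENNReal.iInf_add]
    exact le_iInf₂ fun π ⟨hfst, hsnd⟩ =>
      (transportCost_map_right_le_of_coupling hg hfst hsnd).trans (hcost hfst id).le
  · have hinv : ∀ᵐ q ∂π, edist (g (f q.2)) q.2 = 0 :=
      ae_of_ae_map (p := fun z => edist (g (f z)) z = 0) measurable_snd.aemeasurable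
        (hsnd ▸ ae_map_edist_apply_self_eq_zero_of_leftInverse hf hg hfg)
    calc transportCost μ ν + c = transportCost μ ((ν.map g).map f) + c := by
          rw [Measure.map_map hf hg, hfg.comp_eq_id, Measure.map_id]
      _ ≤ ∫⁻ q, edist q.1 (f q.2) ∂π + c := by
          gcongr
          exact transportCost_map_right_le_of_coupling hf hfst hsnd
      _ = ∫⁻ q, edist q.1 (g (f q.2)) ∂π := (hcost hfst f).symm
      _ ≤ ∫⁻ q, edist q.1 q.2 ∂π := lintegral_mono_ae <| hinv.mono fun q hq => by
          simpa only [edist_comm q.2, hq, add_zero] using edist_triangle q.1 q.2 (g (f q.2))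

lemma transportCost_triangle [StandardBorelSpace X] (μ ν ρ : Measure X) [IsFiniteMeasure ν] :
    transportCost μ ρ ≤ transportCost μ ν + transportCost ν ρ := by
  refine ENNReal.le_iInf₂_add_iInf₂ fun π ⟨hπ₁, hπ₂⟩ π' ⟨hπ'₁, hπ'₂⟩ => ?_
  rcases isEmpty_or_nonempty X with _ | _
  · simpa using transportCost_le (μ := μ) (ν := ρ) (π := 0)
      (Subsingleton.elim _ _) (Subsingleton.elim _ _)
  have : IsFiniteMeasure (π.map Prod.snd) := hπ₂ ▸ inferInstance
  have : IsFiniteMeasure (π'.map Prod.fst) := hπ'₁ ▸ inferInstance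
  have : IsFiniteMeasure π := Measure.isFiniteMeasure_of_map measurable_snd.aemeasurable
  have : IsFiniteMeasure π' := Measure.isFiniteMeasure_of_map measurable_fst.aemeasurable
  obtain ⟨σ, rfl, rfl⟩ := exists_measure_map_eq_and_map_eq_of_marginal_eq (hπ₂.trans hπ'₁.symm)
  have hleft : Measurable fun q : (X × X) × X => q.1 := measurable_fst
  have hright : Measurable fun q : (X × X) × X => (q.1.2, q.2) := by fun_prop
  have houter : Measurable fun q : (X × X) × X => (q.1.1, q.2) := by fun_prop
  calc transportCost μ ρ ≤ ∫⁻ q, edist q.1 q.2 ∂σ.map fun q => (q.1.1, q.2) := by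
        refine transportCost_le ?_ ?_
        · rw [← hπ₁, Measure.map_map measurable_fst hleft, Measure.map_map measurable_fst houter]
          rfl
        · rw [← hπ'₂, Measure.map_map measurable_snd hright, Measure.map_map measurable_snd houter]
          rfl
    _ = ∫⁻ q, edist q.1.1 q.2 ∂σ := lintegral_map measurable_edist houter
    _ ≤ ∫⁻ q, (edist q.1.1 q.1.2 + edist q.1.2 q.2) ∂σ :=
        lintegral_mono fun q => edist_triangle q.1.1 q.1.2 q.2
    _ = _ := by
        rw [lintegral_map measurable_edist hleft, lintegral_map measurable_edist hright]
        exact lintegral_add_left (measurable_edist.comp hleft) _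

end TransportCost

section WassersteinSpace

variable {X Y : Type*} [MeasurableSpace X] [PseudoMetricSpace X] [MeasurableSpace Y]
  [PseudoMetricSpace Y] {μ ν ζ : Measure X}

lemma mem_WSet_one_iff :
    μ ∈ WSet X 1 ↔ IsProbabilityMeasure μ ∧ ∃ x₀, ∫⁻ z, edist z x₀ ∂μ < ∞ := by
  simp only [WSet, mem_ofPred_eq, ENNReal.rpow_one]

lemma lintegral_edist_lt_top_of_mem_WSet (hμ : μ ∈ WSet X 1) (y : X) :
    ∫⁻ z, edist z y ∂μ < ∞ := by
  obtain ⟨_, x₀, hx₀⟩ := mem_WSet_one_iff.1 hμ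
  calc ∫⁻ z, edist z y ∂μ ≤ ∫⁻ z, (edist z x₀ + edist x₀ y) ∂μ :=
        lintegral_mono fun z => edist_triangle z x₀ y
    _ = ∫⁻ z, edist z x₀ ∂μ + edist x₀ y := by
        rw [lintegral_add_right _ measurable_const, lintegral_const, measure_univ, mul_one]
    _ < ∞ := ENNReal.add_lt_top.2 ⟨hx₀, edist_lt_top _ _⟩

lemma map_mem_WSet (hμ : μ ∈ WSet X 1) {g : X → Y} (hg : Measurable g) {x₀ : X} {y₀ : Y}
    {C : ℝ≥0∞} (hC : C ≠ ∞) (h : ∀ z, edist (g z) y₀ ≤ edist z x₀ + C) :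
    μ.map g ∈ WSet Y 1 := by
  have : IsProbabilityMeasure μ := hμ.1
  refine mem_WSet_one_iff.2 ⟨Measure.isProbabilityMeasure_map hg.aemeasurable, y₀, ?_⟩
  calc ∫⁻ w, edist w y₀ ∂μ.map g ≤ ∫⁻ z, edist (g z) y₀ ∂μ := lintegral_map_le _ _
    _ ≤ ∫⁻ z, (edist z x₀ + C) ∂μ := lintegral_mono h
    _ = ∫⁻ z, edist z x₀ ∂μ + C := by
        rw [lintegral_add_right _ measurable_const, lintegral_const, measure_univ, mul_one]
    _ < ∞ := ENNReal.add_lt_top.2 ⟨lintegral_edist_lt_top_of_mem_WSet hμ x₀, hC.lt_top⟩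

lemma smul_add_smul_mem_WSet (hμ : μ ∈ WSet X 1) (hν : ν ∈ WSet X 1) {a b : ℝ≥0∞}
    (hab : a + b = 1) : a • μ + b • ν ∈ WSet X 1 := by
  obtain ⟨_, x₀, hx₀⟩ := mem_WSet_one_iff.1 hμ
  have : IsProbabilityMeasure ν := hν.1
  have ha : a ≠ ∞ := fun h => by simp [h] at hab
  have hb : b ≠ ∞ := fun h => by simp [h] at hab
  refine mem_WSet_one_iff.2 ⟨⟨by simp [hab]⟩, x₀, ?_⟩
  rw [lintegral_add_measure, lintegral_smul_measure, lintegral_smul_measure]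
  exact ENNReal.add_lt_top.2 ⟨ENNReal.mul_lt_top ha.lt_top hx₀,
    ENNReal.mul_lt_top hb.lt_top (lintegral_edist_lt_top_of_mem_WSet hν x₀)⟩

variable [OpensMeasurableSpace X]

lemma dirac_mem_WSet (x : X) : Measure.dirac x ∈ WSet X 1 :=
  mem_WSet_one_iff.2 ⟨inferInstance, x, by simp [lintegral_dirac' x measurable_edist_left]⟩

lemma integrable_dist_of_mem_WSet (hμ : μ ∈ WSet X 1) (y : X) :
    Integrable (fun z => dist z y) μ := by
  refine ⟨(continuous_id.dist continuous_const).measurable.aestronglyMeasurable, ?_⟩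
  simpa only [hasFiniteIntegral_iff_ofReal (ae_of_all _ fun _ => dist_nonneg), ← edist_dist]
    using lintegral_edist_lt_top_of_mem_WSet hμ y

variable [SecondCountableTopology X]

lemma Wdist_dirac_right (hμ : μ ∈ WSet X 1) (y : X) :
    Wdist 1 μ (Measure.dirac y) = ∫ z, dist z y ∂μ := by
  have : IsProbabilityMeasure μ := hμ.1
  simp only [Wdist_one_eq_toReal_transportCost, transportCost_dirac_right, dist_edist]
  exact (integral_toReal measurable_edist_left.aemeasurable
    (ae_of_all _ fun z => edist_lt_top z y)).symm

lemma Wdist_dirac_dirac (x y : X) :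
    Wdist 1 (Measure.dirac x) (Measure.dirac y) = dist x y := by
  rw [Wdist_dirac_right (dirac_mem_WSet x)]
  exact integral_dirac' _ _ (continuous_id.dist continuous_const).stronglyMeasurable

variable [StandardBorelSpace X]

lemma transportCost_lt_top (hμ : μ ∈ WSet X 1) (hν : ν ∈ WSet X 1) : transportCost μ ν < ∞ := by
  obtain ⟨_, x₀, hx₀⟩ := mem_WSet_one_iff.1 hμ
  have : IsProbabilityMeasure ν := hν.1
  calc transportCost μ ν
      ≤ transportCost μ (Measure.dirac x₀) + transportCost (Measure.dirac x₀) ν :=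
        transportCost_triangle _ _ _
    _ = ∫⁻ z, edist z x₀ ∂μ + ∫⁻ z, edist z x₀ ∂ν := by
        rw [transportCost_dirac_right, transportCost_comm, transportCost_dirac_right]
    _ < ∞ := ENNReal.add_lt_top.2 ⟨hx₀, lintegral_edist_lt_top_of_mem_WSet hν x₀⟩

lemma Wdist_eq_add_iff (hμ : μ ∈ WSet X 1) (hν : ν ∈ WSet X 1) (hζ : ζ ∈ WSet X 1) :
    Wdist 1 μ ζ = Wdist 1 μ ν + Wdist 1 ν ζ ↔
      transportCost μ ζ = transportCost μ ν + transportCost ν ζ := by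
  have hμν := (transportCost_lt_top hμ hν).ne
  have hνζ := (transportCost_lt_top hν hζ).ne
  simp only [Wdist_one_eq_toReal_transportCost]
  rw [← ENNReal.toReal_add hμν hνζ, ENNReal.toReal_eq_toReal_iff'
    (transportCost_lt_top hμ hζ).ne (ENNReal.add_ne_top.2 ⟨hμν, hνζ⟩)]

lemma Wdist_eq_add_of_transportCost_eq_add (hμ : μ ∈ WSet X 1) (hν : ν ∈ WSet X 1)
    (hζ : ζ ∈ WSet X 1) {C : ℝ≥0∞} (hμζ : transportCost μ ζ = transportCost μ ν + C)
    (hνζ : transportCost ν ζ ≤ C) : Wdist 1 μ ζ = Wdist 1 μ ν + Wdist 1 ν ζ := by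
  have : IsProbabilityMeasure ν := hν.1
  refine (Wdist_eq_add_iff hμ hν hζ).2 (le_antisymm (transportCost_triangle μ ν ζ) ?_)
  rw [hμζ]
  gcongr

lemma ae_dist_eq_add_of_Wdist_dirac_eq_add {y : X} (hμ : μ ∈ WSet X 1) (hν : ν ∈ WSet X 1)
    (h : Wdist 1 μ ν = Wdist 1 μ (Measure.dirac y) + Wdist 1 (Measure.dirac y) ν) :
    ∀ᵐ a ∂μ, ∀ᵐ b ∂ν, dist a b = dist a y + dist y b := by
  have : IsProbabilityMeasure μ := hμ.1
  have : IsProbabilityMeasure ν := hν.1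
  rw [Wdist_eq_add_iff hμ (dirac_mem_WSet y) hν] at h
  have hmeas : Measurable fun q : X × X => edist q.1 y + edist y q.2 := by fun_prop
  have hsum : ∫⁻ q, (edist q.1 y + edist y q.2) ∂μ.prod ν = transportCost μ ν :=
    calc ∫⁻ q, (edist q.1 y + edist y q.2) ∂μ.prod ν
        = ∫⁻ q, edist q.1 y ∂μ.prod ν + ∫⁻ q, edist y q.2 ∂μ.prod ν :=
          lintegral_add_left (measurable_fst.edist measurable_const) _
      _ = ∫⁻ z, edist z y ∂μ + ∫⁻ z, edist y z ∂ν := by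
          rw [measurePreserving_fst.lintegral_comp measurable_edist_left,
            measurePreserving_snd.lintegral_comp measurable_edist_right]
      _ = transportCost μ ν := by rw [h, transportCost_dirac_right, transportCost_dirac_left]
  have hle : transportCost μ ν ≤ ∫⁻ q, edist q.1 q.2 ∂μ.prod ν :=
    transportCost_le (by simp) (by simp)
  have heq : ∀ᵐ q ∂μ.prod ν, edist q.1 q.2 = edist q.1 y + edist y q.2 := by
    refine ae_eq_of_ae_le_of_lintegral_le (ae_of_all _ fun _ => edist_triangle _ _ _) ?_
      hmeas.aemeasurable (hsum.trans_le hle)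
    exact ((lintegral_mono fun _ => edist_triangle _ _ _).trans_lt
      (hsum.trans_lt (transportCost_lt_top hμ hν))).ne
  refine (Measure.ae_ae_of_ae_prod heq).mono fun a ha => ha.mono fun b hb => ?_
  simp only [dist_edist, hb, ENNReal.toReal_add (edist_ne_top _ _) (edist_ne_top _ _)]

end WassersteinSpace

section MetricInvariants

variable {X : Type*} [MeasurableSpace X] [PseudoMetricSpace X] {p : ℝ} {μ : Measure X}
  {Φ : Measure X → Measure X}

/-- `μ` is prolongable if every geodesic (in the metric sense) from `μ` can be prolonged: each
`ν ∈ 𝒲_p(X)` lies between `μ` and some `ζ ≠ ν`. -/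
def IsProlongable (p : ℝ) (μ : Measure X) : Prop :=
  ∀ ν ∈ WSet X p, ∃ ζ ∈ WSet X p, ζ ≠ ν ∧ Wdist p μ ζ = Wdist p μ ν + Wdist p ν ζ

/-- `μ` is a pole if every `ν ∈ 𝒲_p(X)` lies between `μ` and some measure that is not
prolongable. In `𝒲₁` of the `ℓ¹`-plane, this metric property singles out the Dirac measures. -/
def IsPole (p : ℝ) (μ : Measure X) : Prop :=
  ∀ ν ∈ WSet X p, ∃ ζ ∈ WSet X p, ¬IsProlongable p ζ ∧
    Wdist p μ ζ = Wdist p μ ν + Wdist p ν ζ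

lemma IsWIsometry.isProlongable_iff (hΦ : IsWIsometry X p Φ) (hμ : μ ∈ WSet X p) :
    IsProlongable p (Φ μ) ↔ IsProlongable p μ := by
  unfold IsProlongable
  rw [hΦ.1.forall]
  refine forall₂_congr fun ν hν => ?_
  rw [hΦ.1.exists]
  refine exists_congr fun ζ => and_congr_right fun hζ => ?_
  rw [hΦ.1.injOn.ne_iff hζ hν, hΦ.2 μ hμ ζ hζ, hΦ.2 μ hμ ν hν, hΦ.2 ν hν ζ hζ]

lemma IsWIsometry.isPole_iff (hΦ : IsWIsometry X p Φ) (hμ : μ ∈ WSet X p) :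
    IsPole p (Φ μ) ↔ IsPole p μ := by
  unfold IsPole
  rw [hΦ.1.forall]
  refine forall₂_congr fun ν hν => ?_
  rw [hΦ.1.exists]
  refine exists_congr fun ζ => and_congr_right fun hζ => ?_
  rw [hΦ.isProlongable_iff hζ, hΦ.2 μ hμ ζ hζ, hΦ.2 μ hμ ν hν, hΦ.2 ν hν ζ hζ]

end MetricInvariants

section DiracMeasures

variable {X : Type*} [MeasurableSpace X] [MetricSpace X] [BorelSpace X]
  {Φ : Measure X → Measure X}

lemma IsIsom.map_mem_WSet {T : X → X} (hT : IsIsom T) {μ : Measure X} (hμ : μ ∈ WSet X 1) :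
    μ.map T ∈ WSet X 1 := by
  have hT_isom : Isometry T := Isometry.of_dist_eq hT.2
  obtain ⟨-, x₀, -⟩ := mem_WSet_one_iff.1 hμ
  exact _root_.map_mem_WSet hμ hT_isom.continuous.measurable (x₀ := x₀) (y₀ := T x₀)
    ENNReal.zero_ne_top fun z => by rw [hT_isom.edist_eq, add_zero]

variable [SecondCountableTopology X]

lemma IsWIsometry.exists_isIsom_dirac (hΦ : IsWIsometry X 1 Φ)
    (hdirac : ∀ μ ∈ WSet X 1, (∃ x, Φ μ = Measure.dirac x) ↔ ∃ x, μ = Measure.dirac x) :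
    ∃ T : X → X, IsIsom T ∧ ∀ y, Φ (Measure.dirac (T y)) = Measure.dirac y := by
  have hpre (y : X) : ∃ x, Φ (Measure.dirac x) = Measure.dirac y := by
    obtain ⟨μ, hμ, hμy⟩ := hΦ.1.surjOn (dirac_mem_WSet y)
    obtain ⟨x, rfl⟩ := (hdirac μ hμ).1 ⟨y, hμy⟩
    exact ⟨x, hμy⟩
  choose T hT using hpre
  have hdist (x y : X) : dist (T x) (T y) = dist x y := by
    rw [← Wdist_dirac_dirac, ← Wdist_dirac_dirac, ← hT x, ← hT y,
      hΦ.2 _ (dirac_mem_WSet _) _ (dirac_mem_WSet _)]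
  refine ⟨T, ⟨⟨(Isometry.of_dist_eq hdist).injective, fun x => ?_⟩, hdist⟩, hT⟩
  obtain ⟨y, hy⟩ := (hdirac _ (dirac_mem_WSet x)).2 ⟨x, rfl⟩
  refine ⟨y, dirac_eq_dirac_iff.1 (hΦ.1.injOn (dirac_mem_WSet _) (dirac_mem_WSet _) ?_)⟩
  rw [hT, hy]

lemma IsWIsometry.integral_dist_map (hΦ : IsWIsometry X 1 Φ) {T : X → X} (hT : IsIsom T)
    (hΦT : ∀ y, Φ (Measure.dirac (T y)) = Measure.dirac y) {μ : Measure X} (hμ : μ ∈ WSet X 1)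
    (y : X) : ∫ z, dist z y ∂Φ (μ.map T) = ∫ z, dist z y ∂μ := by
  have hμT := hT.map_mem_WSet hμ
  have hT_meas : Measurable T := (Isometry.of_dist_eq hT.2).continuous.measurable
  have hcont : Continuous fun z => dist z (T y) := by fun_prop
  calc ∫ z, dist z y ∂Φ (μ.map T) = Wdist 1 (Φ (μ.map T)) (Φ (Measure.dirac (T y))) := by
        rw [hΦT, Wdist_dirac_right (hΦ.1.mapsTo hμT)]
    _ = ∫ z, dist z (T y) ∂μ.map T := by
        rw [hΦ.2 _ hμT _ (dirac_mem_WSet _), Wdist_dirac_right hμT]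
    _ = ∫ z, dist z y ∂μ := by
        rw [integral_map hT_meas.aemeasurable hcont.aestronglyMeasurable]
        simp only [hT.2]

end DiracMeasures

section RealLine

variable {μ ν : Measure ℝ}

lemma tendsto_slope_dist_left_nhdsGT (z s : ℝ) :
    Tendsto (slope (fun t => dist z t) s) (𝓝[>] s)
      (𝓝 (2 * (Iic s).indicator 1 z - 1)) := by
  have hpos : ∀ᶠ t in 𝓝[>] s, s < t := eventually_mem_nhdsWithin
  refine tendsto_const_nhds.congr' ?_
  rcases le_or_gt z s with hz | hz
  · filter_upwards [hpos] with t ht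
    rw [indicator_of_mem (mem_Iic.2 hz), slope_def_field, Real.dist_eq, Real.dist_eq,
      abs_of_nonpos (by linarith), abs_of_nonpos (by linarith), eq_div_iff (sub_pos.2 ht).ne']
    simp only [Pi.one_apply]
    ring
  · have hnear : ∀ᶠ t in 𝓝[>] s, t < z := eventually_nhdsWithin_of_eventually_nhds (gt_mem_nhds hz)
    filter_upwards [hpos, hnear] with t ht htz
    rw [indicator_of_notMem (by simpa using hz), slope_def_field, Real.dist_eq, Real.dist_eq,
      abs_of_pos (by linarith), abs_of_pos (by linarith), eq_div_iff (sub_pos.2 ht).ne']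
    ring

lemma hasDerivWithinAt_integral_dist (hμ : μ ∈ WSet ℝ 1) (s : ℝ) :
    HasDerivWithinAt (fun t => ∫ z, dist z t ∂μ) (2 * cdf μ s - 1) (Ioi s) s := by
  have : IsProbabilityMeasure μ := hμ.1
  have hdist_int := integrable_dist_of_mem_WSet hμ
  have hslope (t : ℝ) : ∫ z, slope (fun t => dist z t) s t ∂μ =
      slope (fun t => ∫ z, dist z t ∂μ) s t := by
    simp only [slope_def_field]
    rw [integral_div, integral_sub (hdist_int t) (hdist_int s)]
  have hlim : ∫ z, (2 * (Iic s).indicator 1 z - 1) ∂μ = 2 * cdf μ s - 1 := by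
    have hind : Integrable ((Iic s).indicator (1 : ℝ → ℝ)) μ :=
      (integrable_const 1).indicator measurableSet_Iic
    rw [integral_sub (hind.const_mul 2) (integrable_const 1), integral_const_mul,
      integral_indicator_one measurableSet_Iic, cdf_eq_real]
    simp
  rw [hasDerivWithinAt_iff_tendsto_slope' self_notMem_Ioi, ← hlim]
  refine (tendsto_integral_filter_of_dominated_convergence (fun _ => 1) (.of_forall fun t => ?_)
    (.of_forall fun t => ae_of_all _ fun z => ?_) (integrable_const 1)
    (ae_of_all _ fun z => tendsto_slope_dist_left_nhdsGT z s)).congr hslope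
  · simp only [slope_def_field]
    exact (((hdist_int t).sub (hdist_int s)).div_const _).aestronglyMeasurable
  · rw [slope_def_field, norm_div, Real.norm_eq_abs, Real.norm_eq_abs, dist_comm z t, dist_comm z s,
      ← Real.dist_eq t s]
    exact div_le_one_of_le₀ (abs_dist_sub_le t s z) dist_nonneg

lemma eq_of_integral_dist_eq_add_const (hμ : μ ∈ WSet ℝ 1) (hν : ν ∈ WSet ℝ 1) {K : ℝ}
    (h : ∀ s, ∫ z, dist z s ∂μ = ∫ z, dist z s ∂ν + K) : μ = ν := by
  have : IsProbabilityMeasure μ := hμ.1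
  have : IsProbabilityMeasure ν := hν.1
  refine Measure.eq_of_cdf μ ν (StieltjesFunction.ext fun s => ?_)
  have hμ' := hasDerivWithinAt_integral_dist hμ s
  rw [funext h] at hμ'
  have := (uniqueDiffWithinAt_Ioi s).eq_deriv _ hμ'
    ((hasDerivWithinAt_integral_dist hν s).add_const K)
  linarith

end RealLine

section Push

/-- Moves the real line away from `c` by distance `1`; `push c c` is sent to the right. -/
noncomputable def push (c t : ℝ) : ℝ := if c ≤ t then t + 1 else t - 1

/-- The left inverse of `push c`. -/
noncomputable def pull (c t : ℝ) : ℝ := if c ≤ t then t - 1 else t + 1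

lemma measurable_push (c : ℝ) : Measurable (push c) :=
  (measurable_id.add_const 1).ite measurableSet_Ici (measurable_id.sub_const 1)

lemma measurable_pull (c : ℝ) : Measurable (pull c) :=
  (measurable_id.sub_const 1).ite measurableSet_Ici (measurable_id.add_const 1)

lemma leftInverse_pull_push (c : ℝ) : Function.LeftInverse (pull c) (push c) := by
  intro t
  unfold push pull
  grind

lemma push_ne_self (c t : ℝ) : push c t ≠ t := by
  unfold push
  grind

lemma edist_push_self (c t : ℝ) : edist (push c t) t = 1 := by
  unfold push
  split_ifs <;> simp [edist_dist]

lemma edist_push (c t : ℝ) : edist c (push c t) = edist c t + 1 := by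
  rw [edist_dist, edist_dist, ← ENNReal.ofReal_one, ← ENNReal.ofReal_add dist_nonneg zero_le_one,
    Real.dist_eq, Real.dist_eq]
  congr 1
  unfold push
  split_ifs with h
  · rw [abs_of_nonpos (by linarith), abs_of_nonpos (by linarith)]
    ring
  · rw [abs_of_pos (by linarith), abs_of_pos (by linarith)]
    ring

end Push

section LOnePlane

variable {X : Type*} [MetricSpace X] (φ : X ≃ᵢ WithLp 1 (ℝ × ℝ))

lemma edist_eq_add_of_isometryEquiv (x y : X) :
    edist x y = edist (φ x).fst (φ y).fst + edist (φ x).snd (φ y).snd := by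
  rw [← φ.edist_eq, WithLp.prod_edist_eq_of_L1]

lemma dist_fst_eq_add_of_dist_eq_add {x y z : X} (h : dist x z = dist x y + dist y z) :
    dist (φ x).fst (φ z).fst = dist (φ x).fst (φ y).fst + dist (φ y).fst (φ z).fst := by
  simp only [← φ.dist_eq, WithLp.prod_dist_eq_of_L1] at h
  have hfst := dist_triangle (φ x).fst (φ y).fst (φ z).fst
  have hsnd := dist_triangle (φ x).snd (φ y).snd (φ z).snd
  linarith

/-- The parametrization `φ` of the `ℓ¹`-plane with the two coordinates exchanged. -/
noncomputable def swapCoordinates : X ≃ᵢ WithLp 1 (ℝ × ℝ) :=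
  φ.trans (IsometryEquiv.withLpProdComm 1 ℝ ℝ)

/-- The map acting as `f` on the first coordinate of the `ℓ¹`-plane and as the identity on the
second. -/
noncomputable def mapFst (f : ℝ → ℝ) (z : X) : X :=
  φ.symm (WithLp.toLp 1 (f (φ z).fst, (φ z).snd))

lemma fst_apply_mapFst (f : ℝ → ℝ) (z : X) : (φ (mapFst φ f z)).fst = f (φ z).fst := by
  simp only [mapFst, φ.apply_symm_apply, WithLp.toLp_fst]

lemma snd_apply_mapFst (f : ℝ → ℝ) (z : X) : (φ (mapFst φ f z)).snd = (φ z).snd := by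
  simp only [mapFst, φ.apply_symm_apply, WithLp.toLp_snd]

lemma leftInverse_mapFst {f g : ℝ → ℝ} (h : Function.LeftInverse f g) :
    Function.LeftInverse (mapFst φ f) (mapFst φ g) := fun z => by
  rw [mapFst, fst_apply_mapFst, snd_apply_mapFst, h]
  exact φ.symm_apply_apply z

lemma edist_mapFst_push_self (c : ℝ) (z : X) : edist (mapFst φ (push c) z) z = 1 := by
  rw [edist_eq_add_of_isometryEquiv φ, fst_apply_mapFst, edist_push_self, snd_apply_mapFst,
    edist_self, add_zero]

lemma edist_mapFst_push {a : X} {c : ℝ} (ha : (φ a).fst = c) (z : X) :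
    edist a (mapFst φ (push c) z) = edist a z + 1 := by
  rw [edist_eq_add_of_isometryEquiv φ, edist_eq_add_of_isometryEquiv φ a z, fst_apply_mapFst, ha,
    edist_push, snd_apply_mapFst, add_right_comm]

variable [MeasurableSpace X] [BorelSpace X]

lemma measurable_coordinates : Measurable fun z => ((φ z).fst, (φ z).snd) :=
  ((WithLp.prod_continuous_ofLp 1 ℝ ℝ).comp φ.continuous).measurable

lemma measurable_mapFst {f : ℝ → ℝ} (hf : Measurable f) : Measurable (mapFst φ f) :=
  (φ.symm.continuous.comp (WithLp.prod_continuous_toLp 1 ℝ ℝ)).measurable.comp <|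
    (hf.comp (measurable_coordinates φ).fst).prodMk (measurable_coordinates φ).snd

variable {μ ν : Measure X}

lemma map_mapFst_push_mem_WSet (hν : ν ∈ WSet X 1) (c : ℝ) :
    ν.map (mapFst φ (push c)) ∈ WSet X 1 := by
  obtain ⟨-, x₀, -⟩ := mem_WSet_one_iff.1 hν
  refine map_mem_WSet hν (measurable_mapFst φ (measurable_push c)) (x₀ := x₀) (y₀ := x₀)
    ENNReal.one_ne_top fun z => ?_
  simpa only [edist_mapFst_push_self, add_comm] using edist_triangle (mapFst φ (push c) z) z x₀

/-- `μ` is concentrated on a line parallel to one of the axes of the `ℓ¹`-plane. -/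
def IsOnCoordinateLine (μ : Measure X) : Prop :=
  (∃ c, ∀ᵐ z ∂μ, (φ z).fst = c) ∨ ∃ c, ∀ᵐ z ∂μ, (φ z).snd = c

variable [SecondCountableTopology X]

lemma transportCost_map_mapFst_push_le [IsProbabilityMeasure ν] (c : ℝ) :
    transportCost ν (ν.map (mapFst φ (push c))) ≤ 1 := by
  refine (transportCost_map_right_le (measurable_mapFst φ (measurable_push c))).trans_eq ?_
  simp only [edist_comm _ (mapFst φ _ _), edist_mapFst_push_self, lintegral_one, measure_univ]

lemma transportCost_map_mapFst_push_eq_add_one [IsProbabilityMeasure μ] {c : ℝ}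
    (hμ : ∀ᵐ z ∂μ, (φ z).fst = c) :
    transportCost μ (ν.map (mapFst φ (push c))) = transportCost μ ν + 1 :=
  transportCost_map_right_eq_add (measurable_mapFst φ (measurable_pull c))
    (measurable_mapFst φ (measurable_push c)) (leftInverse_mapFst φ (leftInverse_pull_push c))
    (hμ.mono fun _ => edist_mapFst_push φ)

end LOnePlane

section Spread

variable {X : Type*} [MetricSpace X] [MeasurableSpace X] [BorelSpace X]
  (φ : X ≃ᵢ WithLp 1 (ℝ × ℝ)) {ν : Measure X}

/-- Half of `ν` is pushed in the first coordinate and half in the second, away from the lines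
through `x`. The result lies beyond `ν` as seen from `δ_x`, and it is not on a coordinate line. -/
noncomputable def spread (x : X) (ν : Measure X) : Measure X :=
  (2⁻¹ : ℝ≥0∞) • ν.map (mapFst φ (push (φ x).fst)) +
    (2⁻¹ : ℝ≥0∞) • ν.map (mapFst (swapCoordinates φ) (push (φ x).snd))

lemma spread_mem_WSet (x : X) (hν : ν ∈ WSet X 1) : spread φ x ν ∈ WSet X 1 :=
  smul_add_smul_mem_WSet (map_mapFst_push_mem_WSet φ hν _)
    (map_mapFst_push_mem_WSet (swapCoordinates φ) hν _) ENNReal.inv_two_add_inv_two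

lemma not_isOnCoordinateLine_spread (x : X) [NeZero ν] :
    ¬IsOnCoordinateLine φ (spread φ x ν) := by
  have hae {P : X → Prop} (h : ∀ᵐ z ∂spread φ x ν, P z) :
      (∀ᵐ z ∂ν, P (mapFst φ (push (φ x).fst) z)) ∧
        ∀ᵐ z ∂ν, P (mapFst (swapCoordinates φ) (push (φ x).snd) z) := by
    obtain ⟨h₁, h₂⟩ := ae_add_measure_iff.1 h
    have h2 : (2⁻¹ : ℝ≥0∞) ≠ 0 := by simp
    exact ⟨ae_of_ae_map (measurable_mapFst φ (measurable_push _)).aemeasurable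
        ((Measure.ae_ennreal_smul_measure_iff h2).1 h₁),
      ae_of_ae_map (measurable_mapFst (swapCoordinates φ) (measurable_push _)).aemeasurable
        ((Measure.ae_ennreal_smul_measure_iff h2).1 h₂)⟩
  rintro (⟨c, hc⟩ | ⟨c, hc⟩)
  · obtain ⟨h₁, h₂⟩ := hae hc
    obtain ⟨z, hz₁, hz₂⟩ := (h₁.and h₂).exists
    rw [fst_apply_mapFst] at hz₁
    exact push_ne_self _ _ (hz₁.trans (hz₂.symm.trans (snd_apply_mapFst (swapCoordinates φ) _ z)))
  · obtain ⟨h₁, h₂⟩ := hae hc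
    obtain ⟨z, hz₁, hz₂⟩ := (h₁.and h₂).exists
    rw [snd_apply_mapFst] at hz₁
    exact push_ne_self _ _ ((fst_apply_mapFst (swapCoordinates φ) _ z).symm.trans
      (hz₂.trans hz₁.symm))

variable [SecondCountableTopology X]

lemma transportCost_dirac_spread (x : X) (hν : ν ∈ WSet X 1) :
    transportCost (Measure.dirac x) (spread φ x ν) = transportCost (Measure.dirac x) ν + 1 := by
  have : IsProbabilityMeasure (ν.map (mapFst φ (push (φ x).fst))) :=
    (map_mapFst_push_mem_WSet φ hν _).1
  have : IsProbabilityMeasure (ν.map (mapFst (swapCoordinates φ) (push (φ x).snd))) :=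
    (map_mapFst_push_mem_WSet (swapCoordinates φ) hν _).1
  have : IsProbabilityMeasure (spread φ x ν) := (spread_mem_WSet φ x hν).1
  have hcost (ψ : X ≃ᵢ WithLp 1 (ℝ × ℝ)) :
      transportCost (Measure.dirac x) (ν.map (mapFst ψ (push (ψ x).fst))) =
        transportCost (Measure.dirac x) ν + 1 :=
    transportCost_map_mapFst_push_eq_add_one ψ (by simp)
  calc transportCost (Measure.dirac x) (spread φ x ν)
      = 2⁻¹ * transportCost (Measure.dirac x) (ν.map (mapFst φ (push (φ x).fst))) +
          2⁻¹ * transportCost (Measure.dirac x)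
            (ν.map (mapFst (swapCoordinates φ) (push (φ x).snd))) := by
        rw [transportCost_dirac_left, transportCost_dirac_left, transportCost_dirac_left, spread,
          lintegral_add_measure, lintegral_smul_measure, lintegral_smul_measure, smul_eq_mul,
          smul_eq_mul]
    _ = transportCost (Measure.dirac x) ν + 1 := by
        rw [hcost φ, show (φ x).snd = (swapCoordinates φ x).fst from rfl,
          hcost (swapCoordinates φ), ← add_mul, ENNReal.inv_two_add_inv_two, one_mul]

lemma transportCost_spread_le (x : X) [IsProbabilityMeasure ν] :
    transportCost ν (spread φ x ν) ≤ 1 :=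
  calc transportCost ν (spread φ x ν)
      ≤ 2⁻¹ * transportCost ν (ν.map (mapFst φ (push (φ x).fst))) +
          2⁻¹ * transportCost ν (ν.map (mapFst (swapCoordinates φ) (push (φ x).snd))) :=
        transportCost_smul_add_smul_le ENNReal.inv_two_add_inv_two _ _ _
    _ ≤ 2⁻¹ * 1 + 2⁻¹ * 1 := by
        gcongr <;> exact transportCost_map_mapFst_push_le _ _
    _ = 1 := by rw [mul_one, ENNReal.inv_two_add_inv_two]

end Spread

section Poles

variable {X : Type*} [MetricSpace X] [MeasurableSpace X] [BorelSpace X] [PolishSpace X]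
  (φ : X ≃ᵢ WithLp 1 (ℝ × ℝ)) {μ ν ζ : Measure X}

lemma isProlongable_of_fst_ae_eq_const (hμ : μ ∈ WSet X 1) {c : ℝ}
    (hc : ∀ᵐ z ∂μ, (φ z).fst = c) : IsProlongable 1 μ := by
  intro ν hν
  have : IsProbabilityMeasure μ := hμ.1
  have : IsProbabilityMeasure ν := hν.1
  have hcost := transportCost_map_mapFst_push_eq_add_one (ν := ν) φ hc
  have hmem := map_mapFst_push_mem_WSet φ hν c
  refine ⟨ν.map (mapFst φ (push c)), hmem, fun heq => ?_,
    Wdist_eq_add_of_transportCost_eq_add hμ hν hmem hcost (transportCost_map_mapFst_push_le φ c)⟩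
  rw [heq] at hcost
  exact (ENNReal.lt_add_right (transportCost_lt_top hμ hν).ne one_ne_zero).ne hcost

lemma fst_ae_eq_of_Wdist_dirac_eq_add {y : X} (hμ : μ ∈ WSet X 1) (hζ : ζ ∈ WSet X 1)
    (hlt : ∃ᵐ a ∂μ, (φ a).fst < (φ y).fst) (hgt : ∃ᵐ a ∂μ, (φ y).fst < (φ a).fst)
    (h : Wdist 1 μ ζ = Wdist 1 μ (Measure.dirac y) + Wdist 1 (Measure.dirac y) ζ) :
    ∀ᵐ b ∂ζ, (φ b).fst = (φ y).fst := by
  have hbetween := ae_dist_eq_add_of_Wdist_dirac_eq_add hμ hζ h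
  obtain ⟨a, ha, hab⟩ := (hlt.and_eventually hbetween).exists
  obtain ⟨a', ha', hab'⟩ := (hgt.and_eventually hbetween).exists
  filter_upwards [hab, hab'] with b hb hb'
  replace hb := dist_fst_eq_add_of_dist_eq_add φ hb
  replace hb' := dist_fst_eq_add_of_dist_eq_add φ hb'
  simp only [Real.dist_eq] at hb hb'
  grind

lemma isOnCoordinateLine_of_isProlongable (hμ : μ ∈ WSet X 1) (h : IsProlongable 1 μ) :
    IsOnCoordinateLine φ μ := by
  have hφ := measurable_coordinates φ
  rcases exists_ae_eq_const_or_frequently_lt_and_gt (μ := μ) hφ.fst.aemeasurable with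
    hfst | ⟨r, hr_lt, hr_gt⟩
  · exact Or.inl hfst
  rcases exists_ae_eq_const_or_frequently_lt_and_gt (μ := μ) hφ.snd.aemeasurable with
    hsnd | ⟨s, hs_lt, hs_gt⟩
  · exact Or.inr hsnd
  obtain ⟨y, hy⟩ := φ.surjective (WithLp.toLp 1 (r, s))
  obtain ⟨ζ, hζ, hne, hbetween⟩ := h _ (dirac_mem_WSet y)
  have : IsProbabilityMeasure ζ := hζ.1
  have hfst := fst_ae_eq_of_Wdist_dirac_eq_add φ hμ hζ (by simpa only [hy]) (by simpa only [hy])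
    hbetween
  have hsnd : ∀ᵐ b ∂ζ, (φ b).snd = (φ y).snd :=
    fst_ae_eq_of_Wdist_dirac_eq_add (swapCoordinates φ) hμ hζ (by simpa [swapCoordinates, hy])
      (by simpa [swapCoordinates, hy]) hbetween
  refine (hne (eq_dirac_of_ae_eq ?_)).elim
  filter_upwards [hfst, hsnd] with b hb hb'
  exact φ.injective (WithLp.ofLp_injective 1 (Prod.ext hb hb'))

lemma exists_fst_ae_eq_of_isPole (hμ : μ ∈ WSet X 1) (h : IsPole 1 μ) :
    ∃ c, ∀ᵐ z ∂μ, (φ z).fst = c := by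
  rcases exists_ae_eq_const_or_frequently_lt_and_gt (μ := μ)
    (measurable_coordinates φ).fst.aemeasurable with hconst | ⟨r, hlt, hgt⟩
  · exact hconst
  obtain ⟨y, hy⟩ := φ.surjective (WithLp.toLp 1 (r, 0))
  obtain ⟨ζ, hζ, hnot, hbetween⟩ := h _ (dirac_mem_WSet y)
  exact (hnot <| isProlongable_of_fst_ae_eq_const φ hζ <| fst_ae_eq_of_Wdist_dirac_eq_add φ hμ hζ
    (by simpa only [hy]) (by simpa only [hy]) hbetween).elim

lemma exists_eq_dirac_of_isPole (φ : X ≃ᵢ WithLp 1 (ℝ × ℝ)) (hμ : μ ∈ WSet X 1)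
    (h : IsPole 1 μ) : ∃ x, μ = Measure.dirac x := by
  have : IsProbabilityMeasure μ := hμ.1
  obtain ⟨c, hc⟩ := exists_fst_ae_eq_of_isPole φ hμ h
  obtain ⟨d, hd⟩ := exists_fst_ae_eq_of_isPole (swapCoordinates φ) hμ h
  refine ⟨φ.symm (WithLp.toLp 1 (c, d)), eq_dirac_of_ae_eq ?_⟩
  filter_upwards [hc, hd] with z hz hz'
  exact φ.eq_symm_apply.2 (WithLp.ofLp_injective 1 (Prod.ext hz hz'))

lemma isPole_dirac (φ : X ≃ᵢ WithLp 1 (ℝ × ℝ)) (x : X) : IsPole 1 (Measure.dirac x) := by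
  intro ν hν
  have : IsProbabilityMeasure ν := hν.1
  have hmem := spread_mem_WSet φ x hν
  refine ⟨spread φ x ν, hmem, fun h => not_isOnCoordinateLine_spread φ x
    (isOnCoordinateLine_of_isProlongable φ hmem h),
    Wdist_eq_add_of_transportCost_eq_add (dirac_mem_WSet x) hν hmem
      (transportCost_dirac_spread φ x hν) (transportCost_spread_le φ x)⟩

lemma isPole_iff_exists_eq_dirac (φ : X ≃ᵢ WithLp 1 (ℝ × ℝ)) (hμ : μ ∈ WSet X 1) :
    IsPole 1 μ ↔ ∃ x, μ = Measure.dirac x :=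
  ⟨exists_eq_dirac_of_isPole φ hμ, fun ⟨x, hx⟩ => hx ▸ isPole_dirac φ x⟩

end Poles

section Coordinates

variable {X : Type*} [MetricSpace X] [MeasurableSpace X] [BorelSpace X]
  (φ : X ≃ᵢ WithLp 1 (ℝ × ℝ)) {μ ν : Measure X}

lemma map_fst_mem_WSet (hμ : μ ∈ WSet X 1) : μ.map (fun z => (φ z).fst) ∈ WSet ℝ 1 := by
  obtain ⟨-, x₀, -⟩ := mem_WSet_one_iff.1 hμ
  refine map_mem_WSet hμ (measurable_coordinates φ).fst (x₀ := x₀) (y₀ := (φ x₀).fst)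
    ENNReal.zero_ne_top fun z => ?_
  rw [edist_eq_add_of_isometryEquiv φ, add_zero]
  exact le_self_add

lemma eq_of_map_fst_eq_of_snd_ae_eq_const
    (hfst : μ.map (fun z => (φ z).fst) = ν.map fun z => (φ z).fst) {c : ℝ}
    (hμ : ∀ᵐ z ∂μ, (φ z).snd = c) (hν : ∀ᵐ z ∂ν, (φ z).snd = c) : μ = ν := by
  let ι : ℝ → X := fun s => φ.symm (WithLp.toLp 1 (s, c))
  have hι : Measurable ι :=
    (φ.symm.continuous.comp (WithLp.prod_continuous_toLp 1 ℝ ℝ)).measurable.comp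
      (measurable_id.prodMk measurable_const)
  have hrec {μ : Measure X} (h : ∀ᵐ z ∂μ, (φ z).snd = c) :
      (μ.map fun z => (φ z).fst).map ι = μ := by
    rw [Measure.map_map hι (measurable_coordinates φ).fst]
    refine (Measure.map_congr (h.mono fun z hz => ?_)).trans Measure.map_id
    exact φ.symm_apply_eq.2 (WithLp.ofLp_injective 1 (Prod.ext rfl hz.symm))
  rw [← hrec hμ, hfst, hrec hν]

lemma integral_dist_eq_add_integral_dist (hμ : μ ∈ WSet X 1) (y : X) :
    ∫ z, dist z y ∂μ =
      ∫ s, dist s (φ y).fst ∂(μ.map fun z => (φ z).fst) +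
        ∫ t, dist t (φ y).snd ∂(μ.map fun z => (φ z).snd) := by
  have hfst : Measurable fun z => (φ z).fst := (measurable_coordinates φ).fst
  have hsnd : Measurable fun z => (φ z).snd := (measurable_coordinates φ).snd
  have hfst_int : Integrable (fun z => dist (φ z).fst (φ y).fst) μ :=
    (integrable_dist_of_mem_WSet (map_fst_mem_WSet φ hμ) _).comp_measurable hfst
  have hsnd_int : Integrable (fun z => dist (φ z).snd (φ y).snd) μ :=
    (integrable_dist_of_mem_WSet (map_fst_mem_WSet (swapCoordinates φ) hμ) _).comp_measurable hsnd
  rw [integral_map hfst.aemeasurable (by fun_prop), integral_map hsnd.aemeasurable (by fun_prop),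
    ← integral_add hfst_int hsnd_int]
  simp only [← φ.dist_eq, WithLp.prod_dist_eq_of_L1]

lemma map_fst_eq_of_integral_dist_eq (hμ : μ ∈ WSet X 1) (hν : ν ∈ WSet X 1)
    (h : ∀ y, ∫ z, dist z y ∂μ = ∫ z, dist z y ∂ν) :
    μ.map (fun z => (φ z).fst) = ν.map fun z => (φ z).fst := by
  refine eq_of_integral_dist_eq_add_const (map_fst_mem_WSet φ hμ) (map_fst_mem_WSet φ hν)
    (K := ∫ t, dist t 0 ∂(ν.map fun z => (φ z).snd) - ∫ t, dist t 0 ∂(μ.map fun z => (φ z).snd))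
    fun s => ?_
  have hs := h (φ.symm (WithLp.toLp 1 (s, 0)))
  rw [integral_dist_eq_add_integral_dist φ hμ, integral_dist_eq_add_integral_dist φ hν,
    φ.apply_symm_apply] at hs
  simp only [WithLp.toLp_fst, WithLp.toLp_snd] at hs
  linarith

lemma eq_of_integral_dist_eq_of_snd_ae_eq_const (hμ : μ ∈ WSet X 1) (hν : ν ∈ WSet X 1)
    (h : ∀ y, ∫ z, dist z y ∂μ = ∫ z, dist z y ∂ν) {c : ℝ} (hc : ∀ᵐ z ∂μ, (φ z).snd = c) :
    μ = ν := by
  refine eq_of_map_fst_eq_of_snd_ae_eq_const φ (map_fst_eq_of_integral_dist_eq φ hμ hν h) hc ?_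
  have hsnd : μ.map (fun z => (φ z).snd) = ν.map fun z => (φ z).snd :=
    map_fst_eq_of_integral_dist_eq (swapCoordinates φ) hμ hν h
  have hmeas : Measurable fun z => (φ z).snd := (measurable_coordinates φ).snd
  have hsingleton : MeasurableSet {t | t = c} := measurableSet_singleton c
  rwa [← ae_map_iff hmeas.aemeasurable hsingleton, ← hsnd,
    ae_map_iff hmeas.aemeasurable hsingleton]

lemma eq_of_integral_dist_eq_of_isOnCoordinateLine (hμ : μ ∈ WSet X 1) (hν : ν ∈ WSet X 1)
    (h : ∀ y, ∫ z, dist z y ∂μ = ∫ z, dist z y ∂ν) (hline : IsOnCoordinateLine φ μ) : μ = ν := by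
  rcases hline with ⟨c, hc⟩ | ⟨c, hc⟩
  · exact eq_of_integral_dist_eq_of_snd_ae_eq_const (swapCoordinates φ) hμ hν h hc
  · exact eq_of_integral_dist_eq_of_snd_ae_eq_const φ hμ hν h hc

end Coordinates

section Rigidity

theorem W1_R2_diagonally_rigid_general {X : Type*} [MetricSpace X] [MeasurableSpace X]
    [BorelSpace X] (φ : X ≃ᵢ WithLp 1 (ℝ × ℝ)) {Φ : Measure X → Measure X}
    (hΦ : IsWIsometry X 1 Φ) :
    ∃ T : X → X, IsIsom T ∧ ∀ μ ∈ WSet X 1, IsOnCoordinateLine φ μ → Φ (μ.map T) = μ := by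
  have : PolishSpace X := φ.toHomeomorph.isClosedEmbedding.polishSpace
  obtain ⟨T, hT, hΦT⟩ := hΦ.exists_isIsom_dirac fun μ hμ => by
    rw [← isPole_iff_exists_eq_dirac φ (hΦ.1.mapsTo hμ), hΦ.isPole_iff hμ,
      isPole_iff_exists_eq_dirac φ hμ]
  refine ⟨T, hT, fun μ hμ hline => ?_⟩
  have hpotential (y : X) := (hΦ.integral_dist_map hT hΦT hμ y).symm
  exact (eq_of_integral_dist_eq_of_isOnCoordinateLine φ hμ (hΦ.1.mapsTo (hT.map_mem_WSet hμ))
    hpotential hline).symm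

/-- The maximum metric on the plane is the `ℓ¹` metric in coordinates rotated by `π / 4`. -/
noncomputable def diagonalIsometryEquiv : ℝ × ℝ ≃ᵢ WithLp 1 (ℝ × ℝ) :=
  IsometryEquiv.mk'
    (fun z => WithLp.toLp 1 ((z.1 + z.2) / 2, (z.1 - z.2) / 2))
    (fun w => (w.fst + w.snd, w.fst - w.snd))
    (fun w => WithLp.ofLp_injective 1 (Prod.ext (by simp) (by simp)))
    (Isometry.of_dist_eq fun z w => by
      rw [WithLp.prod_dist_eq_of_L1, Prod.dist_eq]
      simp only [WithLp.toLp_fst, WithLp.toLp_snd, Real.dist_eq]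
      grind)

lemma isOnCoordinateLine_diagonalIsometryEquiv {μ : Measure (ℝ × ℝ)}
    (h : msupport μ ⊆ Lplus ∨ msupport μ ⊆ Lminus) :
    IsOnCoordinateLine diagonalIsometryEquiv μ := by
  rcases h with h | h
  · refine Or.inr ⟨0, (ae_mem_of_msupport_subset h).mono fun z (hz : z.2 = z.1) => ?_⟩
    change (z.1 - z.2) / 2 = 0
    linarith
  · refine Or.inl ⟨0, (ae_mem_of_msupport_subset h).mono fun z (hz : z.2 = -z.1) => ?_⟩
    change (z.1 + z.2) / 2 = 0
    linarith

end Rigidity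

/-- Diagonal rigidity of `𝒲₁(ℝ², d_m)`: every isometry, composed with the push-forward
of a suitable isometry of the base, fixes all measures supported on `L₊` or `L₋`. -/
theorem W1_R2_diagonally_rigid (Φ : Measure (ℝ × ℝ) → Measure (ℝ × ℝ))
    (hΦ : IsWIsometry (ℝ × ℝ) 1 Φ) :
    ∃ T : ℝ × ℝ → ℝ × ℝ, IsIsom T ∧ ∀ μ ∈ WSet (ℝ × ℝ) 1,
      (msupport μ ⊆ Lplus ∨ msupport μ ⊆ Lminus) → Φ (μ.map T) = μ := by
  obtain ⟨T, hT, hΦT⟩ := W1_R2_diagonally_rigid_general diagonalIsometryEquiv hΦ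
  exact ⟨T, hT, fun μ hμ hsupp => hΦT μ hμ (isOnCoordinateLine_diagonalIsometryEquiv hsupp)⟩
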